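/- Let α be a composition, l = max{i : α_i ≠ 0}, and n = max{l, α_1, ..., α_l}. Then the Newton polytope of the key polynomial κ_α equals the Schubitope S_{D(α)} of the skyline diagram D(α) of α. -/

import Mathlib

open Finset MvPolynomial

/-- Auxiliary greedy matching count for a parenthesis word (`true` = '(', `false` = ')'),
given the current number of unmatched open parentheses. -/
def matchedPairsAux : List Bool → ℕ → ℕ
  | [], _ => 0
  | true :: rest, o => matchedPairsAux rest (o + 1)
  | false :: rest, 0 => matchedPairsAux rest 0
  | false :: rest, o + 1 => matchedPairsAux rest o + 1

/-- The number of paired `()`'s in a parenthesis word (`true` = '(', `false` = ')'). -/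
def matchedPairs (w : List Bool) : ℕ := matchedPairsAux w 0

/-- Column `j` of a diagram `D`: the set `D_j = {i : (i,j) ∈ D}`. -/
def colSetNat (D : Finset (ℕ × ℕ)) (j : ℕ) : Finset ℕ :=
  (D.filter fun p => p.2 = j).image Prod.fst

/-- The parenthesis part of `word_{j,I}(D)`: reading rows `i = 0, …, n-1` from top to
bottom, record '(' (= `true`) if `(i,j) ∉ D` and `i ∈ I`, and ')' (= `false`) if
`(i,j) ∈ D` and `i ∉ I`.  (The `⋆`'s play no role in the matching.) -/
def colWordNat (n : ℕ) (D : Finset (ℕ × ℕ)) (j : ℕ) (I : Finset ℕ) : List Bool :=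
  (List.range n).filterMap fun i =>
    if (i, j) ∈ D then (if i ∈ I then none else some false)
    else (if i ∈ I then some true else none)

/-- `θ_D^j(I)`: the number of paired `()`'s plus the number of `⋆`'s in `word_{j,I}(D)`. -/
def thetaColNat (n : ℕ) (D : Finset (ℕ × ℕ)) (j : ℕ) (I : Finset ℕ) : ℕ :=
  matchedPairs (colWordNat n D j I) + (colSetNat D j ∩ I).card

/-- `θ_D(I) = Σ_{j=1}^n θ_D^j(I)`. -/
def thetaNat (n : ℕ) (D : Finset (ℕ × ℕ)) (I : Finset ℕ) : ℕ :=
  ∑ j ∈ Finset.range n, thetaColNat n D j I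

/-- The Schubitope `S_D ⊆ ℝ^n` of a diagram `D ⊆ [n]²`, viewed inside `ℝ^ℕ` (coordinates
beyond the `n`-th vanish). -/
def schubitopeNat (n : ℕ) (D : Finset (ℕ × ℕ)) : Set (ℕ → ℝ) :=
  {a | (∀ i, 0 ≤ a i) ∧ (∀ i, n ≤ i → a i = 0) ∧
    (∑ i ∈ Finset.range n, a i) = (D.card : ℝ) ∧
    ∀ I ⊆ Finset.range n, ∑ i ∈ I, a i ≤ (thetaNat n D I : ℝ)}

/-- The skyline diagram of a composition `α`, inside `[n]²` (`0`-indexed): row `i`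
contains the boxes in columns `0, …, α_{i+1} - 1`. -/
def skyline (α : ℕ →₀ ℕ) (n : ℕ) : Finset (ℕ × ℕ) :=
  (Finset.range n ×ˢ Finset.range n).filter fun p => p.2 < α p.1

/-- The Newton polytope of a polynomial in the variables `x_1, x_2, …`. -/
def newtonPolytopeNat (f : MvPolynomial ℕ ℤ) : Set (ℕ → ℝ) :=
  convexHull ℝ ((fun (d : ℕ →₀ ℕ) (i : ℕ) => ((d i : ℕ) : ℝ)) '' ↑f.support)

/-- Combined count of stars and matched pairs; a letter is (in D, in I). -/
def wcount : List (Bool × Bool) → ℕ → ℕ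
  | [], _ => 0
  | (true, true) :: w, o => wcount w o + 1
  | (true, false) :: w, 0 => wcount w 0
  | (true, false) :: w, o + 1 => wcount w o + 1
  | (false, true) :: w, o => wcount w (o + 1)
  | (false, false) :: w, o => wcount w o

theorem wcount_bounds (w : List (Bool × Bool)) :
    ∀ o, wcount w o ≤ wcount w (o + 1) ∧ wcount w (o + 1) ≤ wcount w o + 1 := by
  induction w with
  | nil => intro o; simp [wcount]
  | cons x w ih =>
    intro o
    obtain ⟨a, b⟩ := x
    cases a <;> cases b <;> cases o <;> simp only [wcount] <;> grind

theorem wcount_prefix (p w w' : List (Bool × Bool)) (h : ∀ o, wcount w o ≤ wcount w' o) :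
    ∀ o, wcount (p ++ w) o ≤ wcount (p ++ w') o := by
  induction p with
  | nil => simpa using h
  | cons x p ih =>
    intro o
    obtain ⟨a, b⟩ := x
    cases a <;> cases b <;> cases o <;> simp only [wcount, List.cons_append] <;> grind

theorem wcount_swap (a1 a2 b1 b2 : Bool) (h : a1 = true → a2 = true) (w : List (Bool × Bool))
    (o : ℕ) : wcount ((a1, b1) :: (a2, b2) :: w) o = wcount ((a1, b2) :: (a2, b1) :: w) o := by
  revert h
  cases a1 <;> cases a2 <;> cases b1 <;> cases b2 <;> cases o <;> simp [wcount]

theorem wcount_mono (a1 a2 b1 b2 : Bool) (h : a1 = true → a2 = true) (w : List (Bool × Bool))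
    (o : ℕ) : wcount ((a2, b1) :: (a1, b2) :: w) o ≤ wcount ((a1, b1) :: (a2, b2) :: w) o := by
  revert h
  have := wcount_bounds w o
  have := wcount_bounds w 0
  cases a1 <;> cases a2 <;> cases b1 <;> cases b2 <;> cases o <;> simp [wcount] <;> grind

theorem wcount_mono_eq (a1 a2 b1 b2 : Bool) (h : a1 = true → a2 = true)
    (hb : b2 = true → b1 = true) (w : List (Bool × Bool))
    (o : ℕ) : wcount ((a1, b1) :: (a2, b2) :: w) o ≤ wcount ((a2, b1) :: (a1, b2) :: w) o := by
  revert h hb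
  cases a1 <;> cases a2 <;> cases b1 <;> cases b2 <;> cases o <;> simp [wcount]

/-- The word in column `j`. -/
def cword (n : ℕ) (α : ℕ → ℕ) (j : ℕ) (I : Finset ℕ) : List (Bool × Bool) :=
  (List.range n).map fun i => (decide (j < α i), decide (i ∈ I))

def Theta (n : ℕ) (α : ℕ → ℕ) (I : Finset ℕ) : ℕ :=
  ∑ j ∈ Finset.range n, wcount (cword n α j I) 0

theorem matched_eq (L : List ℕ) (A I : ℕ → Prop) [DecidablePred A] [DecidablePred I] : ∀ o,
    matchedPairsAux (L.filterMap fun i =>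
      if A i then (if I i then none else some false)
      else (if I i then some true else none)) o + (L.filter fun i => A i ∧ I i).length
    = wcount (L.map fun i => (decide (A i), decide (I i))) o := by
  induction L with
  | nil => intro o; simp [matchedPairsAux, wcount]
  | cons x L ih =>
    intro o
    by_cases hA : A x <;> by_cases hI : I x <;> cases o <;>
      simp [hA, hI, matchedPairsAux, wcount, ← ih] <;> omega

theorem theta_eq (n : ℕ) (α : ℕ →₀ ℕ) (I : Finset ℕ) :
    thetaNat n (skyline α n) I = Theta n α I := by
  unfold thetaNat Theta
  refine Finset.sum_congr rfl fun j hj => ?_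
  have hj' := Finset.mem_range.1 hj
  unfold thetaColNat matchedPairs colWordNat cword
  rw [← matched_eq]
  congr 1
  · congr 1
    refine List.filterMap_congr fun i hi => ?_
    have := List.mem_range.1 hi
    simp [skyline, hj', this]
  · have : colSetNat (skyline α n) j ∩ I = (Finset.range n).filter fun i => j < α i ∧ i ∈ I := by
      ext i
      simp [colSetNat, skyline]
      grind
    rw [this, Finset.card_def, Finset.filter_val, Finset.range_val, Multiset.range,
      Multiset.filter_coe, Multiset.coe_card]

theorem cword_split (n : ℕ) (α : ℕ → ℕ) (j : ℕ) (I : Finset ℕ) (i : ℕ) (hi : i + 1 < n) :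
    cword n α j I = ((List.range i).map fun i => (decide (j < α i), decide (i ∈ I))) ++
      (decide (j < α i), decide (i ∈ I)) :: (decide (j < α (i+1)), decide (i+1 ∈ I)) ::
      ((List.range (n - (i+2))).map fun k =>
        (decide (j < α (i+2+k)), decide (i+2+k ∈ I))) := by
  obtain ⟨m, rfl⟩ : ∃ m, n = i + 2 + m := ⟨n - (i+2), by omega⟩
  have : i + 2 + m - (i+2) = m := by omega
  rw [this, cword, List.range_add, List.range_succ, List.range_succ]
  simp

/-- swap image of a set -/
def swI (i : ℕ) (I : Finset ℕ) : Finset ℕ := I.map (Equiv.swap i (i+1)).toEmbedding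

theorem mem_swI (i : ℕ) (I : Finset ℕ) (x : ℕ) : x ∈ swI i I ↔ Equiv.swap i (i+1) x ∈ I := by
  simp [swI, Finset.mem_map_equiv]

theorem swI_swI (i : ℕ) (I : Finset ℕ) : swI i (swI i I) = I := by
  ext x; simp [mem_swI]

theorem swI_subset {i n : ℕ} {I : Finset ℕ} (hi : i + 1 < n) (h : I ⊆ Finset.range n) :
    swI i I ⊆ Finset.range n := by
  intro x hx
  rw [mem_swI] at hx
  have := Finset.mem_range.1 (h hx)
  rw [Finset.mem_range]
  rw [Equiv.swap_apply_def] at this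
  split_ifs at this <;> omega

theorem swap_lo (i x : ℕ) (h : x < i) : Equiv.swap i (i+1) x = x :=
  Equiv.swap_apply_of_ne_of_ne (by omega) (by omega)

theorem swap_hi (i k : ℕ) : Equiv.swap i (i+1) (i + 2 + k) = i + 2 + k :=
  Equiv.swap_apply_of_ne_of_ne (by omega) (by omega)

theorem Theta_swap_le (n : ℕ) (α : ℕ → ℕ) (I : Finset ℕ) (i : ℕ) (hi : i + 1 < n)
    (h : α i < α (i+1)) : Theta n α (swI i I) ≤ Theta n α I := by
  refine Finset.sum_le_sum fun j _ => ?_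
  rw [cword_split _ _ _ _ i hi, cword_split _ _ _ _ i hi]
  have e1 : ((List.range i).map fun x => (decide (j < α x), decide (x ∈ swI i I))) =
     ((List.range i).map fun x => (decide (j < α x), decide (x ∈ I))) :=
    List.map_congr_left fun x hx => by simp [mem_swI, swap_lo i x (List.mem_range.1 hx)]
  rw [e1]
  simp only [mem_swI, swap_hi, Equiv.swap_apply_left, Equiv.swap_apply_right]
  refine wcount_prefix _ _ _ (fun o => ?_) 0
  exact (wcount_swap _ _ _ _ (by simp; omega) _ _).le

theorem Theta_swap (n : ℕ) (α : ℕ → ℕ) (I : Finset ℕ) (i : ℕ) (hi : i + 1 < n)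
    (h : α i < α (i+1)) : Theta n α (swI i I) = Theta n α I := by
  refine le_antisymm (Theta_swap_le n α I i hi h) ?_
  have := Theta_swap_le n α (swI i I) i hi h
  rwa [swI_swI] at this

theorem Theta_mono (n : ℕ) (α : ℕ → ℕ) (I : Finset ℕ) (i : ℕ) (hi : i + 1 < n)
    (h : α i < α (i+1)) : Theta n (fun x => α (Equiv.swap i (i+1) x)) I ≤ Theta n α I := by
  refine Finset.sum_le_sum fun j _ => ?_
  rw [cword_split _ _ _ _ i hi, cword_split _ _ _ _ i hi]
  have e1 : ((List.range i).map fun x =>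
      (decide (j < α (Equiv.swap i (i+1) x)), decide (x ∈ I))) =
     ((List.range i).map fun x => (decide (j < α x), decide (x ∈ I))) :=
    List.map_congr_left fun x hx => by simp [swap_lo i x (List.mem_range.1 hx)]
  rw [e1]
  simp only [swap_hi, Equiv.swap_apply_left, Equiv.swap_apply_right]
  refine wcount_prefix _ _ _ (fun o => ?_) 0
  exact wcount_mono _ _ _ _ (by simp; omega) _ _

theorem Theta_mono_eq (n : ℕ) (α : ℕ → ℕ) (I : Finset ℕ) (i : ℕ) (hi : i + 1 < n)
    (h : α i < α (i+1)) (hI : i + 1 ∈ I → i ∈ I) :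
    Theta n (fun x => α (Equiv.swap i (i+1) x)) I = Theta n α I := by
  refine le_antisymm (Theta_mono n α I i hi h) ?_
  refine Finset.sum_le_sum fun j _ => ?_
  rw [cword_split _ _ _ _ i hi, cword_split _ _ _ _ i hi]
  have e1 : ((List.range i).map fun x =>
      (decide (j < α (Equiv.swap i (i+1) x)), decide (x ∈ I))) =
     ((List.range i).map fun x => (decide (j < α x), decide (x ∈ I))) :=
    List.map_congr_left fun x hx => by simp [swap_lo i x (List.mem_range.1 hx)]
  rw [e1]
  simp only [swap_hi, Equiv.swap_apply_left, Equiv.swap_apply_right]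
  refine wcount_prefix _ _ _ (fun o => ?_) 0
  exact wcount_mono_eq _ _ _ _ (by simp; omega) (by simpa using hI) _ _

/-- when all D-letters precede all non-D letters -/
theorem wcount_dec (L : List ℕ) (A I : ℕ → Prop) [DecidablePred A] [DecidablePred I]
    (hL : L.Pairwise fun x y => A y → A x) :
    wcount (L.map fun i => (decide (A i), decide (I i))) 0
      = (L.map fun i => if A i ∧ I i then 1 else 0).sum := by
  have key : ∀ L : List ℕ, (∀ x ∈ L, ¬ A x) → ∀ o,
      wcount (L.map fun i => (decide (A i), decide (I i))) o = 0 := by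
    intro L
    induction L with
    | nil => intro _ o; simp [wcount]
    | cons x L ih =>
      intro h o
      have hx := h x (by simp)
      by_cases hI : I x <;> simp [hx, hI, wcount] <;>
        simpa using ih (fun y hy => h y (by simp [hy])) _
  induction L with
  | nil => simp [wcount]
  | cons x L ih =>
    rw [List.pairwise_cons] at hL
    by_cases hA : A x
    · have := ih hL.2
      by_cases hI : I x <;> simp [hA, hI, wcount] at this ⊢ <;> omega
    · have hall : ∀ y ∈ x :: L, ¬ A y := by
        intro y hy
        rcases List.mem_cons.1 hy with rfl | hy
        · exact hA
        · exact fun h => hA (hL.1 y hy h)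
      rw [key _ hall]
      symm
      rw [List.sum_eq_zero]
      intro y hy
      obtain ⟨z, hz, rfl⟩ := List.mem_map.1 hy
      simp [hall z hz]

theorem Theta_dec (n : ℕ) (α : ℕ → ℕ) (hα : ∀ i j : ℕ, i ≤ j → α j ≤ α i)
    (hn : ∀ i, α i ≤ n) (I : Finset ℕ) (hI : I ⊆ Finset.range n) :
    Theta n α I = ∑ i ∈ I, α i := by
  have h1 : ∀ j, wcount (cword n α j I) 0 = ∑ i ∈ I, if j < α i then 1 else 0 := by
    intro j
    rw [cword, wcount_dec]
    · have : ((List.range n).map fun i => if j < α i ∧ i ∈ I then 1 else 0).sum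
          = ∑ i ∈ Finset.range n, if j < α i ∧ i ∈ I then 1 else 0 := rfl
      rw [this]
      rw [← Finset.sum_subset hI]
      · refine Finset.sum_congr rfl fun x hx => by simp [hx]
      · intro x _ hx; simp [hx]
    · refine List.pairwise_lt_range.imp ?_
      intro a b hab h
      exact lt_of_lt_of_le h (hα _ _ hab.le)
  unfold Theta
  simp only [h1]
  rw [Finset.sum_comm]
  refine Finset.sum_congr rfl fun i _ => ?_
  rw [← Finset.card_filter]
  have : (Finset.range n).filter (fun j => j < α i) = Finset.range (α i) := by
    ext x; have := hn i; simp; omega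
  rw [this, Finset.card_range]

theorem card_skyline (n : ℕ) (α : ℕ →₀ ℕ) (hn : ∀ i, α i ≤ n) :
    (skyline α n).card = ∑ i ∈ Finset.range n, α i := by
  unfold skyline
  rw [Finset.card_filter, Finset.sum_product]
  refine Finset.sum_congr rfl fun i _ => ?_
  rw [← Finset.card_filter]
  have : (Finset.range n).filter (fun j => j < α i) = Finset.range (α i) := by
    ext x; have := hn i; simp; omega
  rw [this, Finset.card_range]

/-- swapped exponent vector -/
noncomputable def sw (i : ℕ) (d : ℕ →₀ ℕ) : ℕ →₀ ℕ :=
  Finsupp.equivMapDomain (Equiv.swap i (i + 1)) d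

theorem sw_apply (i : ℕ) (d : ℕ →₀ ℕ) (x : ℕ) : sw i d x = d (Equiv.swap i (i+1) x) := by
  simp [sw, Finsupp.equivMapDomain_apply]

theorem sw_sw (i : ℕ) (d : ℕ →₀ ℕ) : sw i (sw i d) = d := by
  ext x; simp [sw_apply]

theorem coeff_rename_sw (i : ℕ) (d : ℕ →₀ ℕ) (f : MvPolynomial ℕ ℤ) :
    coeff d (rename (Equiv.swap i (i + 1)) f) = coeff (sw i d) f := by
  conv_lhs => rw [← sw_sw i d]
  rw [sw, Finsupp.equivMapDomain_eq_mapDomain,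
    coeff_rename_mapDomain _ (Equiv.injective _)]

theorem sum_sw (i : ℕ) (d : ℕ →₀ ℕ) (I : Finset ℕ) :
    ∑ x ∈ swI i I, sw i d x = ∑ x ∈ I, d x := by
  simp [swI, sw_apply]

/-- basic coefficient recursion -/
theorem coeff_rec (i : ℕ) (f g : MvPolynomial ℕ ℤ)
    (H : (X i - X (i + 1)) * g = X i * f - rename (Equiv.swap i (i + 1)) (X i * f))
    (e : ℕ →₀ ℕ) :
    coeff e g - (if e (i+1) = 0 then 0 else
        coeff (e + Finsupp.single i 1 - Finsupp.single (i+1) 1) g) =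
      coeff e f - (if e (i+1) = 0 then 0 else
        coeff (sw i (e + Finsupp.single i 1 - Finsupp.single (i+1) 1)) f) := by
  have h := congrArg (coeff (e + Finsupp.single i 1)) H
  rw [map_mul, rename_X, Equiv.swap_apply_left, sub_mul, coeff_sub, coeff_sub] at h
  simp only [coeff_X_mul', coeff_rename_sw] at h
  by_cases he : e (i+1) = 0 <;> simpa [he] using h

theorem symm_g (i : ℕ) (f g : MvPolynomial ℕ ℤ)
    (H : (X i - X (i + 1)) * g = X i * f - rename (Equiv.swap i (i + 1)) (X i * f))
    (e : ℕ →₀ ℕ) : coeff (sw i e) g = coeff e g := by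
  rw [← coeff_rename_sw]
  congr 1
  have h := congrArg (rename (Equiv.swap i (i + 1))) H
  have hne : (X i - X (i + 1) : MvPolynomial ℕ ℤ) ≠ 0 := by
    rw [sub_ne_zero]
    intro h
    have := X_injective h
    omega
  have h2 : rename (Equiv.swap i (i + 1)) (rename (Equiv.swap i (i + 1)) (X i * f)) = X i * f := by
    rw [rename_rename]
    have : (⇑(Equiv.swap i (i + 1)) ∘ ⇑(Equiv.swap i (i + 1))) = id := by ext x; simp
    rw [this, rename_id]; rfl
  rw [map_sub, h2, map_mul, map_sub, rename_X, rename_X, Equiv.swap_apply_left,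
    Equiv.swap_apply_right] at h
  apply mul_left_cancel₀ hne
  linear_combination -h - H

theorem exists_far (i : ℕ) (f g : MvPolynomial ℕ ℤ)
    (H : (X i - X (i + 1)) * g = X i * f - rename (Equiv.swap i (i + 1)) (X i * f)) :
    ∀ (m : ℕ) (e : ℕ →₀ ℕ), e (i+1) = m → coeff e g ≠ 0 →
      ∃ e' : ℕ →₀ ℕ, (coeff e' f ≠ 0 ∨ coeff (sw i e') f ≠ 0) ∧
        (∀ x, x ≠ i → x ≠ i + 1 → e' x = e x) ∧ e' i + e' (i+1) = e i + e (i+1) ∧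
        e i ≤ e' i := by
  intro m
  induction m with
  | zero =>
    intro e he hg
    have := coeff_rec i f g H e
    simp [he] at this
    exact ⟨e, Or.inl (this ▸ hg), fun _ _ _ => rfl, rfl, le_rfl⟩
  | succ m ih =>
    intro e he hg
    have := coeff_rec i f g H e
    set e1 := e + Finsupp.single i 1 - Finsupp.single (i+1) 1 with he1
    have v1 : e1 i = e i + 1 := by simp [he1]
    have v2 : e1 (i+1) = m := by simp [he1, he]
    have v3 : ∀ x, x ≠ i → x ≠ i + 1 → e1 x = e x := by
      intro x h1 h2
      simp [he1, Finsupp.single_apply, Ne.symm h1, Ne.symm h2]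
    have hne : e (i+1) ≠ 0 := by omega
    simp only [hne, if_false] at this
    by_cases c1 : coeff e f = 0
    · by_cases c2 : coeff (sw i e1) f = 0
      · have c3 : coeff e1 g ≠ 0 := by
          intro h; rw [c1, c2, h] at this; simp at this; exact hg this
        obtain ⟨e', h1, h2, h3, h4⟩ := ih e1 v2 c3
        refine ⟨e', h1, fun x a b => (h2 x a b).trans (v3 x a b), by omega, by omega⟩
      · exact ⟨e1, Or.inr c2, v3, by omega, by omega⟩
    · exact ⟨e, Or.inl c1, fun _ _ _ => rfl, rfl, le_rfl⟩

/-- integer points of the Schubitope -/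
def InS (n : ℕ) (α : ℕ → ℕ) (d : ℕ →₀ ℕ) : Prop :=
  (∀ x, n ≤ x → d x = 0) ∧ ∑ x ∈ Finset.range n, d x = ∑ x ∈ Finset.range n, α x ∧
    ∀ I ⊆ Finset.range n, ∑ x ∈ I, d x ≤ Theta n α I

theorem swI_range {i n : ℕ} (hi : i + 1 < n) : swI i (Finset.range n) = Finset.range n := by
  apply Finset.Subset.antisymm (swI_subset hi (Finset.Subset.refl _))
  intro x hx
  have := swI_subset hi (Finset.Subset.refl (Finset.range n)) (x := Equiv.swap i (i+1) x)
  rw [mem_swI, Equiv.swap_apply_self] at this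
  rw [mem_swI]
  exact this hx

theorem InS_sw {n i : ℕ} {α : ℕ → ℕ} {d : ℕ →₀ ℕ} (hi : i + 1 < n) (h : α i < α (i+1))
    (hd : InS n α d) : InS n α (sw i d) := by
  obtain ⟨h1, h2, h3⟩ := hd
  refine ⟨fun x hx => ?_, ?_, fun I hI => ?_⟩
  · rw [sw_apply, Equiv.swap_apply_of_ne_of_ne (by omega) (by omega)]; exact h1 x hx
  · rw [← h2, ← sum_sw i d, swI_range hi]
  · rw [← swI_swI i I, sum_sw, Theta_swap n α _ i hi h]
    exact h3 _ (swI_subset hi hI)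

theorem InS_hat {n i : ℕ} {α d : ℕ →₀ ℕ} (hi : i + 1 < n) (h : α i < α (i+1))
    (hd : InS n (sw i α) d) : InS n α d := by
  obtain ⟨h1, h2, h3⟩ := hd
  refine ⟨h1, ?_, fun I hI => ?_⟩
  · rw [h2]
    conv_lhs => rw [← swI_range hi]
    rw [sum_sw]
  · have e : (⇑(sw i α)) = fun x => α (Equiv.swap i (i+1) x) := by
      funext x; exact sw_apply i α x
    have := h3 I hI
    rw [e] at this
    exact this.trans (Theta_mono n α I i hi h)

theorem sum_pair (i : ℕ) (d : ℕ → ℕ) (I : Finset ℕ) :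
    ∑ x ∈ I, d x = (if i ∈ I then d i else 0) + (if i + 1 ∈ I then d (i+1) else 0) +
      ∑ x ∈ I.filter (fun x => x ≠ i ∧ x ≠ i + 1), d x := by
  have e : I.filter (fun x => x ≠ i ∧ x ≠ i + 1) = (I.erase i).erase (i+1) := by
    ext x; simp; tauto
  rw [e]
  by_cases h1 : i ∈ I <;> by_cases h2 : i + 1 ∈ I
  · rw [if_pos h1, if_pos h2, add_assoc, Finset.add_sum_erase _ _ (by simp [h2]),
      Finset.add_sum_erase _ _ h1]
  · rw [if_pos h1, if_neg h2, Finset.erase_eq_of_notMem (a := i+1) (by simp [h2]), add_zero,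
      Finset.add_sum_erase _ _ h1]
  · rw [if_neg h1, if_pos h2, Finset.erase_eq_of_notMem (a := i) h1, zero_add,
      Finset.add_sum_erase _ _ h2]
  · rw [if_neg h1, if_neg h2, Finset.erase_eq_of_notMem (a := i) h1,
      Finset.erase_eq_of_notMem h2, zero_add, zero_add]

theorem InS_step {n i : ℕ} {α : ℕ → ℕ} (hi : i + 1 < n) (h : α i < α (i+1))
    (f g : MvPolynomial ℕ ℤ)
    (H : (X i - X (i + 1)) * g = X i * f - rename (Equiv.swap i (i + 1)) (X i * f))
    (hf : ∀ d, coeff d f ≠ 0 → InS n α d) : ∀ d, coeff d g ≠ 0 → InS n α d := by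
  have half : ∀ d, coeff d g ≠ 0 → (∀ x, n ≤ x → d x = 0) ∧
      ∑ x ∈ Finset.range n, d x = ∑ x ∈ Finset.range n, α x ∧
      ∀ I ⊆ Finset.range n, (i + 1 ∈ I → i ∈ I) → ∑ x ∈ I, d x ≤ Theta n α I := by
    intro d hd
    obtain ⟨e, h1, h2, h3, h4⟩ := exists_far i f g H _ d rfl hd
    have he : InS n α e := by
      rcases h1 with h1 | h1
      · exact hf _ h1
      · have := InS_sw hi h (hf _ h1)
        rwa [sw_sw] at this
    obtain ⟨k1, k2, k3⟩ := he
    have hsum : ∀ I : Finset ℕ, ∑ x ∈ I.filter (fun x => x ≠ i ∧ x ≠ i + 1), d x =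
        ∑ x ∈ I.filter (fun x => x ≠ i ∧ x ≠ i + 1), e x := by
      intro I
      refine Finset.sum_congr rfl fun x hx => ?_
      rw [Finset.mem_filter] at hx
      exact (h2 x hx.2.1 hx.2.2).symm
    refine ⟨fun x hx => ?_, ?_, fun I hI hI' => ?_⟩
    · rw [← h2 x (by omega) (by omega)]; exact k1 x hx
    · rw [← k2, sum_pair i d, sum_pair i e, hsum]
      have m1 : i ∈ Finset.range n := by simp; omega
      have m2 : i + 1 ∈ Finset.range n := by simp; omega
      rw [if_pos m1, if_pos m2, if_pos m1, if_pos m2, h3]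
    · refine le_trans ?_ (k3 I hI)
      rw [sum_pair i d, sum_pair i e, hsum]
      split_ifs <;> first | omega | tauto
  intro d hd
  obtain ⟨h1, h2, h3⟩ := half d hd
  refine ⟨h1, h2, fun I hI => ?_⟩
  by_cases hc : i + 1 ∈ I → i ∈ I
  · exact h3 I hI hc
  · have hd' : coeff (sw i d) g ≠ 0 := by rwa [symm_g i f g H]
    have := (half _ hd').2.2 (swI i I) (swI_subset hi hI) (by
      rw [mem_swI, mem_swI, Equiv.swap_apply_left, Equiv.swap_apply_right]; tauto)
    rwa [sum_sw, Theta_swap n α I i hi h] at this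

/-- the first `k` elements in the order `σ` -/
def chain (σ : Equiv.Perm ℕ) (k : ℕ) : Finset ℕ := (Finset.range k).map σ.toEmbedding

theorem mem_chain (σ : Equiv.Perm ℕ) (k x : ℕ) : x ∈ chain σ k ↔ σ.symm x < k := by
  simp [chain, Finset.mem_map_equiv]

theorem swI_chain (i : ℕ) (σ : Equiv.Perm ℕ) (k : ℕ) :
    swI i (chain σ k) = chain (σ.trans (Equiv.swap i (i+1))) k := by
  ext x; simp [mem_swI, mem_chain]

/-- the inductive claim -/
def Good (n : ℕ) (α : ℕ → ℕ) (g : MvPolynomial ℕ ℤ) : Prop :=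
  (∀ d, coeff d g ≠ 0 → InS n α d) ∧
  ∀ σ : Equiv.Perm ℕ, (∀ x, x < n ↔ σ x < n) →
    ∃ v : ℕ →₀ ℕ, coeff v g ≠ 0 ∧ ∀ k ≤ n, ∑ x ∈ chain σ k, v x = Theta n α (chain σ k)

theorem Good_step {n i : ℕ} {α : ℕ →₀ ℕ} (hi : i + 1 < n) (h : α i < α (i+1))
    (f g : MvPolynomial ℕ ℤ)
    (H : (X i - X (i + 1)) * g = X i * f - rename (Equiv.swap i (i + 1)) (X i * f))
    (hf : Good n (sw i α) f) : Good n α g := by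
  obtain ⟨hf1, hf2⟩ := hf
  have hf1' : ∀ d, coeff d f ≠ 0 → InS n α d := fun d hd => InS_hat hi h (hf1 d hd)
  have hg1 := InS_step hi h f g H hf1'
  refine ⟨hg1, ?_⟩
  have e : (⇑(sw i α)) = fun x => α (Equiv.swap i (i+1) x) := by
    funext x; exact sw_apply i α x
  have main : ∀ σ : Equiv.Perm ℕ, (∀ x, x < n ↔ σ x < n) → σ.symm i < σ.symm (i+1) →
      ∃ v : ℕ →₀ ℕ, coeff v g ≠ 0 ∧ ∀ k ≤ n, ∑ x ∈ chain σ k, v x = Theta n α (chain σ k) := by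
    intro σ hσ hlt
    obtain ⟨v, hv1, hv2⟩ := hf2 σ hσ
    have hv3 : ∀ k ≤ n, ∑ x ∈ chain σ k, v x = Theta n α (chain σ k) := by
      intro k hk
      rw [hv2 k hk, e]
      apply Theta_mono_eq n α _ i hi h
      rw [mem_chain, mem_chain]; omega
    refine ⟨v, ?_, hv3⟩
    have hrec := coeff_rec i f g H v
    by_cases hz : v (i+1) = 0
    · simp [hz] at hrec; rwa [hrec]
    simp only [hz, if_false] at hrec
    set e1 := v + Finsupp.single i 1 - Finsupp.single (i+1) 1 with he1
    have v1 : e1 i = v i + 1 := by simp [he1]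
    have v3 : ∀ x, x ≠ i → x ≠ i + 1 → e1 x = v x := by
      intro x h1 h2
      simp [he1, Finsupp.single_apply, Ne.symm h1, Ne.symm h2]
    have hnot : ¬ InS n α e1 := by
      intro hS
      have hk : σ.symm i + 1 ≤ n := by
        have := (hσ (σ.symm i)).2 (by simp; omega)
        omega
      have hsub : chain σ (σ.symm i + 1) ⊆ Finset.range n := by
        intro x hx
        rw [mem_chain] at hx
        have := (hσ (σ.symm x)).1 (by omega)
        simpa using this
      have h1 := hS.2.2 _ hsub
      rw [← hv3 _ hk, sum_pair i e1, sum_pair i v] at h1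
      have m1 : i ∈ chain σ (σ.symm i + 1) := by rw [mem_chain]; omega
      have m2 : i + 1 ∉ chain σ (σ.symm i + 1) := by rw [mem_chain]; omega
      have hs : ∑ x ∈ (chain σ (σ.symm i + 1)).filter (fun x => x ≠ i ∧ x ≠ i + 1), e1 x =
          ∑ x ∈ (chain σ (σ.symm i + 1)).filter (fun x => x ≠ i ∧ x ≠ i + 1), v x := by
        refine Finset.sum_congr rfl fun x hx => ?_
        rw [Finset.mem_filter] at hx
        exact v3 x hx.2.1 hx.2.2
      rw [if_pos m1, if_pos m1, if_neg m2, if_neg m2, hs] at h1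
      omega
    have c1 : coeff e1 g = 0 := by
      by_contra hc; exact hnot (hg1 _ hc)
    have c2 : coeff (sw i e1) f = 0 := by
      by_contra hc
      have := InS_sw hi h (hf1' _ hc)
      rw [sw_sw] at this
      exact hnot this
    rw [c1, c2, sub_zero, sub_zero] at hrec
    rwa [hrec]
  intro σ hσ
  rcases lt_trichotomy (σ.symm i) (σ.symm (i+1)) with hlt | heq | hgt
  · exact main σ hσ hlt
  · have := σ.symm.injective heq; omega
  · have hsw : ∀ y, y < n ↔ Equiv.swap i (i+1) y < n := by
      intro y
      rw [Equiv.swap_apply_def]; split_ifs <;> omega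
    obtain ⟨v, hv1, hv2⟩ := main (σ.trans (Equiv.swap i (i+1)))
      (fun x => (hσ x).trans (hsw _)) (by simpa using hgt)
    refine ⟨sw i v, by rwa [symm_g i f g H], fun k hk => ?_⟩
    have := hv2 k hk
    rw [← swI_chain, Theta_swap n α _ i hi h] at this
    rw [← this, ← sum_sw i v, swI_swI] 

theorem Good_base {n : ℕ} {α : ℕ →₀ ℕ} (hα : ∀ i j : ℕ, i ≤ j → α j ≤ α i)
    (hn : ∀ i, α i ≤ n) (hl : ∀ i, α i ≠ 0 → i < n) : Good n α (monomial α 1) := by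
  constructor
  · intro d hd
    rw [coeff_monomial] at hd
    have : α = d := by by_contra hc; simp [hc] at hd
    subst this
    refine ⟨fun x hx => ?_, rfl, fun I hI => (Theta_dec n α hα hn I hI).ge⟩
    by_contra hc
    have := hl x hc
    omega
  · intro σ hσ
    refine ⟨α, by simp, fun k hk => (Theta_dec n α hα hn _ ?_).symm⟩
    intro x hx
    rw [mem_chain] at hx
    have := (hσ (σ.symm x)).1 (by omega)
    simpa using this

theorem measure_sw {i n : ℕ} {α : ℕ →₀ ℕ} (hi : i + 1 < n) (h : α i < α (i+1)) :
    ∑ x ∈ Finset.range n, x * sw i α x < ∑ x ∈ Finset.range n, x * α x := by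
  rw [sum_pair i (fun x => x * sw i α x), sum_pair i (fun x => x * α x)]
  have m1 : i ∈ Finset.range n := by simp; omega
  have m2 : i + 1 ∈ Finset.range n := by simp; omega
  have hs : ∑ x ∈ (Finset.range n).filter (fun x => x ≠ i ∧ x ≠ i + 1), x * sw i α x =
      ∑ x ∈ (Finset.range n).filter (fun x => x ≠ i ∧ x ≠ i + 1), x * α x := by
    refine Finset.sum_congr rfl fun x hx => ?_
    rw [Finset.mem_filter] at hx
    rw [sw_apply, Equiv.swap_apply_of_ne_of_ne hx.2.1 hx.2.2]
  rw [if_pos m1, if_pos m1, if_pos m2, if_pos m2, hs, sw_apply, sw_apply,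
    Equiv.swap_apply_left, Equiv.swap_apply_right]
  nlinarith

theorem Good_all (Key : (ℕ →₀ ℕ) → MvPolynomial ℕ ℤ)
    (hbase : ∀ α : ℕ →₀ ℕ, (∀ i j : ℕ, i ≤ j → α j ≤ α i) → Key α = monomial α 1)
    (hrec : ∀ (α : ℕ →₀ ℕ) (i : ℕ), α i < α (i + 1) →
      (X i - X (i + 1)) * Key α =
        X i * Key (Finsupp.equivMapDomain (Equiv.swap i (i + 1)) α) -
          rename (Equiv.swap i (i + 1))
            (X i * Key (Finsupp.equivMapDomain (Equiv.swap i (i + 1)) α)))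
    (n : ℕ) : ∀ (m : ℕ) (α : ℕ →₀ ℕ), ∑ x ∈ Finset.range n, x * α x = m →
      (∀ i, α i ≤ n) → (∀ i, α i ≠ 0 → i < n) → Good n α (Key α) := by
  intro m
  induction m using Nat.strong_induction_on with
  | _ m ih =>
    intro α hm hn hl
    by_cases hdec : ∀ i, α (i+1) ≤ α i
    · have hα : ∀ i j : ℕ, i ≤ j → α j ≤ α i := fun i j hij => antitone_nat_of_succ_le hdec hij
      rw [hbase α hα]
      exact Good_base hα hn hl
    · push Not at hdec
      obtain ⟨i, h⟩ := hdec
      have hi : i + 1 < n := hl _ (by omega)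
      refine Good_step hi h _ _ (hrec α i h) ?_
      refine ih _ (hm ▸ measure_sw hi h) (sw i α) rfl (fun x => ?_) (fun x hx => ?_)
      · rw [sw_apply]; exact hn _
      · rw [sw_apply] at hx
        have := hl _ hx
        rw [Equiv.swap_apply_def] at this
        split_ifs at this <;> omega

theorem abel_nonneg (c b : ℕ → ℝ) (m : ℕ) (hc : ∀ k < m, c (k+1) ≤ c k)
    (hb : ∀ k ≤ m + 1, 0 ≤ ∑ x ∈ Finset.range k, b x) :
    c m * ∑ x ∈ Finset.range (m+1), b x ≤ ∑ x ∈ Finset.range (m+1), c x * b x := by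
  induction m with
  | zero => simp
  | succ m ih =>
    have := ih (fun k hk => hc k (by omega)) (fun k hk => hb k (by omega))
    rw [Finset.sum_range_succ, Finset.sum_range_succ (fun x => c x * b x), mul_add]
    have h1 := hb (m+1) (by omega)
    have h2 := hc m (by omega)
    nlinarith

theorem exists_sort (n : ℕ) (c : ℕ → ℝ) : ∃ σ : Equiv.Perm ℕ, (∀ x, x < n ↔ σ x < n) ∧
    ∀ k, k + 1 < n → c (σ (k+1)) ≤ c (σ k) := by
  let τ : Equiv.Perm (Fin n) := Tuple.sort (fun i : Fin n => - c i)
  have hτ : Monotone ((fun i : Fin n => - c i) ∘ τ) := Tuple.monotone_sort _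
  let σ : Equiv.Perm ℕ := τ.extendDomain (Fin.equivSubtype (n := n))
  have hσ : ∀ x (hx : x < n), σ x = τ ⟨x, hx⟩ := by
    intro x hx
    have := Equiv.Perm.extendDomain_apply_image τ (Fin.equivSubtype (n := n)) ⟨x, hx⟩
    simpa [σ] using this
  have hσ' : ∀ x, ¬ x < n → σ x = x := by
    intro x hx
    exact Equiv.Perm.extendDomain_apply_not_subtype _ _ hx
  refine ⟨σ, fun x => ?_, fun k hk => ?_⟩
  · by_cases hx : x < n
    · simp [hσ x hx, hx]
    · simp [hσ' x hx]
  · rw [hσ _ hk, hσ k (by omega)]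
    have := hτ (show (⟨k, by omega⟩ : Fin n) ≤ ⟨k+1, hk⟩ by simp)
    simpa using this

theorem clm_eq (n : ℕ) (φ : (ℕ → ℝ) →L[ℝ] ℝ) (a : ℕ → ℝ) (ha : ∀ i, n ≤ i → a i = 0) :
    φ a = ∑ x ∈ Finset.range n, φ (Pi.single x 1) * a x := by
  have : a = ∑ x ∈ Finset.range n, a x • (Pi.single x (1:ℝ) : ℕ → ℝ) := by
    funext y
    rw [Finset.sum_apply]
    simp only [Pi.smul_apply, Pi.single_apply, smul_eq_mul, mul_ite, mul_one, mul_zero]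
    rw [Finset.sum_ite_eq]
    split_ifs with h
    · rfl
    · exact ha y (by simpa using h)
  conv_lhs => rw [this]
  simp [map_sum, mul_comm]

theorem sum_chain_full (n : ℕ) (σ : Equiv.Perm ℕ) (hσ : ∀ x, x < n ↔ σ x < n) :
    chain σ n = Finset.range n := by
  ext x
  rw [mem_chain, Finset.mem_range, hσ, Equiv.apply_symm_apply]

theorem chain_sub (n : ℕ) (σ : Equiv.Perm ℕ) (hσ : ∀ x, x < n ↔ σ x < n) (k : ℕ) (hk : k ≤ n) :
    chain σ k ⊆ Finset.range n := by
  intro x hx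
  rw [mem_chain] at hx
  have := (hσ (σ.symm x)).1 (by omega)
  simpa using this

theorem final_eq (n : ℕ) (α : ℕ →₀ ℕ) (g : MvPolynomial ℕ ℤ) (hn : ∀ i, α i ≤ n)
    (hg : Good n α g) : newtonPolytopeNat g = schubitopeNat n (skyline α n) := by
  obtain ⟨hg1, hg2⟩ := hg
  apply Set.Subset.antisymm
  · apply convexHull_min
    · rintro _ ⟨d, hd, rfl⟩
      obtain ⟨h1, h2, h3⟩ := hg1 d (mem_support_iff.1 hd)
      refine ⟨fun i => by positivity, fun i hi => by simp [h1 i hi], ?_, fun I hI => ?_⟩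
      · rw [card_skyline n α hn, ← h2]; push_cast; rfl
      · rw [theta_eq]
        have h4 : ((∑ x ∈ I, d x : ℕ) : ℝ) ≤ (Theta n α I : ℝ) := by exact_mod_cast h3 I hI
        push_cast at h4
        exact h4
    · rintro a ⟨a1, a2, a3, a4⟩ b ⟨b1, b2, b3, b4⟩ s t hs ht hst
      refine ⟨fun i => ?_, fun i hi => ?_, ?_, fun I hI => ?_⟩
      · have := a1 i
        have := b1 i
        simp only [Pi.add_apply, Pi.smul_apply, smul_eq_mul]
        positivity
      · simp [a2 i hi, b2 i hi]
      · simp only [Pi.add_apply, Pi.smul_apply, smul_eq_mul]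
        rw [Finset.sum_add_distrib, ← Finset.mul_sum, ← Finset.mul_sum, a3, b3, ← add_mul, hst,
          one_mul]
      · simp only [Pi.add_apply, Pi.smul_apply, smul_eq_mul]
        rw [Finset.sum_add_distrib, ← Finset.mul_sum, ← Finset.mul_sum]
        calc _ ≤ s * (thetaNat n (skyline α n) I : ℝ) + t * (thetaNat n (skyline α n) I : ℝ) :=
              add_le_add (mul_le_mul_of_nonneg_left (a4 I hI) hs)
                (mul_le_mul_of_nonneg_left (b4 I hI) ht)
          _ = _ := by rw [← add_mul, hst, one_mul]
  · intro a ha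
    by_contra hna
    obtain ⟨a1, a2, a3, a4⟩ := ha
    have hcl : IsClosed (newtonPolytopeNat g) :=
      Set.Finite.isClosed_convexHull ℝ ((Finset.finite_toSet _).image _)
    obtain ⟨φ, u, hu1, hu2⟩ := geometric_hahn_banach_closed_point (convex_convexHull ℝ _) hcl hna
    obtain ⟨σ, hσ, hc⟩ := exists_sort n (fun x => φ (Pi.single x 1))
    obtain ⟨v, hv1, hv2⟩ := hg2 σ hσ
    obtain ⟨s1, s2, s3⟩ := hg1 v hv1
    have hv := hu1 (fun i => (v i : ℝ)) (subset_convexHull ℝ _ ⟨v, mem_support_iff.2 hv1, rfl⟩)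
    have hle : φ a ≤ φ (fun i => (v i : ℝ)) := by
      rw [clm_eq n φ a a2, clm_eq n φ (fun i => (v i : ℝ)) (fun i hi => by simp [s1 i hi])]
      rw [← sub_nonneg, ← Finset.sum_sub_distrib]
      simp only [← mul_sub]
      have hre : ∀ (k : ℕ) (F : ℕ → ℝ), ∑ x ∈ chain σ k, F x = ∑ x ∈ Finset.range k, F (σ x) := by
        intro k F; simp [chain]
      rw [← sum_chain_full n σ hσ, hre]
      rcases n with _ | m
      · simp
      have hb : ∀ k ≤ m + 1, 0 ≤ ∑ x ∈ Finset.range k, ((v (σ x) : ℝ) - a (σ x)) := by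
        intro k hk
        rw [← hre k (fun x => (v x : ℝ) - a x), Finset.sum_sub_distrib, sub_nonneg]
        have h1 := a4 _ (chain_sub _ σ hσ k hk)
        rw [theta_eq, ← hv2 k hk] at h1
        push_cast at h1
        exact h1
      have := abel_nonneg (fun x => φ (Pi.single (σ x) 1)) (fun x => (v (σ x) : ℝ) - a (σ x)) m
        (fun k hk => hc k (by omega)) hb
      refine le_trans (le_of_eq ?_) this
      rw [← hre (m+1) (fun x => (v x : ℝ) - a x), Finset.sum_sub_distrib, sum_chain_full _ σ hσ,
        a3, card_skyline _ α hn, ← s2]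
      push_cast
      ring
    linarith

/-- The Newton polytope of the key polynomial `κ_α` equals the Schubitope `S_{D(α)}` of
the skyline diagram `D(α)` of `α`, where `l = max{i : α_i ≠ 0}` and
`n = max{l, α_1, …, α_l}`. -/
theorem stmt14 (Key : (ℕ →₀ ℕ) → MvPolynomial ℕ ℤ)
    -- If `α` is weakly decreasing then `κ_α = x_1^{α_1} x_2^{α_2} ⋯` (variables are
    -- `0`-indexed: the variable `X i` is `x_{i+1}` and `α i` is `α_{i+1}`).
    (hbase : ∀ α : ℕ →₀ ℕ, (∀ i j : ℕ, i ≤ j → α j ≤ α i) → Key α = monomial α 1)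
    -- If `α i < α (i+1)` then `κ_α = ∂_i (x_i κ_α̂)` where `α̂` swaps entries `i`, `i+1`:
    -- `(xᵢ - xᵢ₊₁) ⬝ κ_α = xᵢ κ_α̂ - sᵢ ⬝ (xᵢ κ_α̂)`.
    (hrec : ∀ (α : ℕ →₀ ℕ) (i : ℕ), α i < α (i + 1) →
      (X i - X (i + 1)) * Key α =
        X i * Key (Finsupp.equivMapDomain (Equiv.swap i (i + 1)) α) -
          rename (Equiv.swap i (i + 1))
            (X i * Key (Finsupp.equivMapDomain (Equiv.swap i (i + 1)) α)))
    (α : ℕ →₀ ℕ)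
    -- `l = max{i : α_i ≠ 0}` (`1`-indexed), i.e. `l` is least with `α_i = 0` for all `i ≥ l`
    (l n : ℕ) (hl₁ : ∀ i, α i ≠ 0 → i < l) (hl₂ : ∀ m, (∀ i, α i ≠ 0 → i < m) → l ≤ m)
    -- `n = max{l, α_1, …, α_l}`
    (hn : n = max l (α.support.sup α))
    :
    newtonPolytopeNat (Key α) = schubitopeNat n (skyline α n) := by
  have h1 : ∀ i, α i ≤ n := by
    intro i
    by_cases h : α i = 0
    · omega
    · have : α i ≤ α.support.sup α := Finset.le_sup (f := α) (Finsupp.mem_support_iff.2 h)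
      omega
  have h2 : ∀ i, α i ≠ 0 → i < n := by
    intro i hi
    have := hl₁ i hi
    omega
  exact final_eq n α _ h1 (Good_all Key hbase hrec n _ α rfl h1 h2)
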